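/- Let f and t be natural numbers with t ≤ f. Suppose: (i) G is (⌊3(f−t)/2⌋ + 2t + 1)-connected; (ii) if t = 0, then every vertex of G has degree at least 2f; and (iii) if t > 0, then every nonempty set S ⊆ V with |S| ≤ t has at least 2f + 1 neighbors. Let T ⊆ V with |T| ≤ t, let F ⊆ V ∖ T with |F| ≤ f − |T|, and set φ = f − |T|. Let Z ⊆ V ∖ T and N = (V ∖ T) ∖ Z, let v ∈ V ∖ T, and define sets A, B ⊆ V ∖ T by the following four exhaustive cases: if |Z ∩ F| ≤ ⌊φ/2⌋ and |N| > f, then A = N and B = Z; if |Z ∩ F| ≤ ⌊φ/2⌋ and |N| ≤ f, then A = Z and B = N; if |Z ∩ F| > ⌊φ/2⌋ and |Z| > f, then A = Z and B = N; if |Z ∩ F| > ⌊φ/2⌋ and |Z| ≤ f, then A = N and B = Z. If v ∈ B, then there exist f + 1 node-disjoint A–v paths in G, each of which excludes F ∪ T. -/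

import Mathlib

/-!
The theorem is a fan version of Menger's theorem combined with a count of the sets that could
separate `A` from `v`.

Write `W = B \ (F ∪ {v})` for the vertices that may be internal to the paths. To find `k` paths
from `A` to `v` that are disjoint outside `v` and run inside `W` after their first vertex
(`exists_fan`), consider the bipartite graph with `k` sources and a copy of `V` on the left, and a
copy of `V` and `k` sinks on the right. A source is joined to every vertex of `A`, a vertex `u` to
itself and to its neighbours in `W`, and to every sink if `u` is adjacent to `v`. In a matching that
covers the left side, following partners from the `i`-th source never reaches a vertex reached from
another source, by injectivity, and ends at a sink, by finiteness, so the matching yields the fan.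
Hall's condition reduces to the following: if no vertex of `U` is adjacent to `v`, then the set
`X = (A ∪ (N(U) ∩ W)) \ U` has at least `k` elements.

To check this for `k = f + 1`, suppose `|X| ≤ f`, and put `C = {v} ∪ (W \ (U ∪ X))` and
`F' = (F ∩ B) \ {v}`. Every neighbour of `C` lies in `X ∪ T ∪ F'`, while `C` and `F'` are disjoint
subsets of `B` (`exists_closed_of_cut`). The four cases defining `A` and `B` leave two
possibilities. If `|A| > f` and `|F ∩ B| ≤ ⌊φ/2⌋`, then `X ∪ T ∪ F'` is too small to separate `v`
from `A \ X`, which is nonempty (`cut_of_large_source`). If `|B| ≤ f`, then `|C| + |F'| ≤ f`, and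
counting the neighbours of `C`, or of a subset of `C` of size `t` when `C` is larger than that,
contradicts the degree or the neighbourhood hypothesis (`cut_of_small_target`).
-/

/-- `G` is `k`-connected: `|V| > k` and removing any set of fewer than `k`
vertices leaves the induced subgraph connected. -/
def KConnected {V : Type*} [Fintype V] (G : SimpleGraph V) (k : ℕ) : Prop :=
  k < Fintype.card V ∧
    ∀ S : Finset V, S.card < k → (G.induce ((↑S : Set V)ᶜ)).Connected

open Finset

/-! ### Disjoint paths from a matching -/

/-- The vertices met when the matching `m` is followed from the source `i`. Sources are the left
summand of the domain of `m`, and sinks are the right summand of its codomain. -/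
inductive Reached {V : Type*} {k : ℕ} (m : Fin k ⊕ V → V ⊕ Fin k) (i : Fin k) : V → Prop
  | base {w : V} : m (Sum.inl i) = Sum.inl w → Reached m i w
  | step {u w : V} : Reached m i u → m (Sum.inr u) = Sum.inl w → Reached m i w

theorem Reached.unique {V : Type*} {k : ℕ} {m : Fin k ⊕ V → V ⊕ Fin k}
    (hm : Function.Injective m) {i j : Fin k} {w : V} (hi : Reached m i w) (hj : Reached m j w) :
    i = j := by
  induction hi with
  | base h =>
    cases hj with
    | base h' => exact Sum.inl_injective (hm (h.trans h'.symm))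
    | step _ h' => exact absurd (hm (h.trans h'.symm)) (by simp)
  | step _ h ih =>
    cases hj with
    | base h' => exact absurd (hm (h.trans h'.symm)) (by simp)
    | step hu h' =>
      have := Sum.inr_injective (hm (h.trans h'.symm))
      subst this
      exact ih hu

/-- Following an injective `m` from a source ends at a sink. -/
theorem Reached.exists_sink {V : Type*} [Finite V] {k : ℕ} {m : Fin k ⊕ V → V ⊕ Fin k}
    (hm : Function.Injective m) (i : Fin k) {a : V} (ha : m (Sum.inl i) = Sum.inl a) :
    ∃ u s, Reached m i u ∧ m (Sum.inr u) = Sum.inr s := by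
  by_contra! hno
  have hnext : ∀ u : {u // Reached m i u}, ∃ w : {w // Reached m i w},
      m (Sum.inr u.1) = Sum.inl w.1 := by
    rintro ⟨u, hu⟩
    rcases h : m (Sum.inr u) with w | s
    · exact ⟨⟨w, .step hu h⟩, rfl⟩
    · exact absurd h (hno u s hu)
  choose g hg using hnext
  have hinj : Function.Injective g := by
    intro u w huw
    apply Subtype.ext
    apply Sum.inr_injective (α := Fin k)
    apply hm
    rw [hg, hg, huw]
  -- On the finite set of reached vertices the successor map is onto, so the first of them has a
  -- second preimage under `m` besides the source.
  obtain ⟨u, hu⟩ := Finite.surjective_of_injective hinj ⟨a, .base ha⟩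
  have := hg u
  rw [hu, ← ha] at this
  exact absurd (hm this) (by simp)

/-- A form of Menger's theorem for fans: `k` paths from `A` to `v`, disjoint outside `v`, whose
internal vertices lie in `W`, exist as soon as, for every set `U` without neighbours of `v`, at least
`k` vertices outside `U` lie in `A` or are neighbours of `U` in `W`. -/
theorem exists_fan {V : Type*} [Fintype V] [DecidableEq V] (G : SimpleGraph V)
    [DecidableRel G.Adj] (k : ℕ) (A W : Finset V) (v : V)
    (hcut : ∀ U : Finset V, (∀ u ∈ U, ¬ G.Adj u v) →
      k ≤ ((A ∪ W.filter (fun w => ∃ u ∈ U, G.Adj u w)) \ U).card) :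
    ∃ (e : Fin k → V) (P : ∀ i, G.Walk (e i) v),
      (∀ i, e i ∈ A) ∧ (∀ i, (P i).IsPath) ∧
      (∀ i j, i ≠ j → ∀ w, w ∈ (P i).support → w ∈ (P j).support → w = v) ∧
      (∀ i, ∀ w ∈ (P i).support, w = e i ∨ w = v ∨ w ∈ W) := by
  let nb : Fin k ⊕ V → Finset (V ⊕ Fin k) := Sum.elim (fun _ => A.disjSum ∅)
    (fun u => (insert u (W.filter (G.Adj u))).disjSum (if G.Adj u v then univ else ∅))
  have hall : ∀ s : Finset (Fin k ⊕ V), s.card ≤ (s.biUnion nb).card := by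
    intro s
    have hs : s.toLeft.card + s.toRight.card = s.card := card_toLeft_add_card_toRight
    have hJ : s.toLeft.card ≤ k := by simpa using card_le_univ s.toLeft
    have hself : ∀ u ∈ s.toRight, Sum.inl u ∈ s.biUnion nb := fun u hu =>
      mem_biUnion.2 ⟨Sum.inr u, mem_toRight.1 hu, by simp [nb]⟩
    -- `s` sees all the sinks if some vertex of `s` is adjacent to `v`; otherwise `hcut` applies,
    -- unless `s` contains no source.
    by_cases h1 : ∃ u ∈ s.toRight, G.Adj u v
    · obtain ⟨u, hu, huv⟩ := h1
      have hsub : s.toRight.disjSum (univ : Finset (Fin k)) ⊆ s.biUnion nb := by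
        intro x hx
        rcases x with x | x
        · exact hself x (by simpa using hx)
        · exact mem_biUnion.2 ⟨Sum.inr u, mem_toRight.1 hu, by simp [nb, huv]⟩
      have := card_le_card hsub
      rw [card_disjSum, card_univ, Fintype.card_fin] at this
      omega
    · push Not at h1
      rcases s.toLeft.eq_empty_or_nonempty with h0 | ⟨i, hi⟩
      · have hsub : s.toRight.disjSum (∅ : Finset (Fin k)) ⊆ s.biUnion nb := by
          intro x hx
          rcases x with x | x
          · exact hself x (by simpa using hx)
          · simp at hx
        have := card_le_card hsub
        rw [card_disjSum] at this
        simp only [h0, card_empty] at *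
        omega
      · have hX := hcut s.toRight h1
        obtain ⟨X, hXdef⟩ : ∃ X, X = (A ∪ W.filter (fun w => ∃ u ∈ s.toRight, G.Adj u w)) \
          s.toRight := ⟨_, rfl⟩
        rw [← hXdef] at hX
        have hsub : (s.toRight ∪ X).disjSum (∅ : Finset (Fin k)) ⊆ s.biUnion nb := by
          intro x hx
          rcases x with x | x
          · rw [inl_mem_disjSum, mem_union] at hx
            rcases hx with hx | hx
            · exact hself x hx
            · rw [hXdef, mem_sdiff, mem_union, mem_filter] at hx
              rcases hx.1 with hx | ⟨hxW, u, hu, hux⟩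
              · exact mem_biUnion.2 ⟨Sum.inl i, mem_toLeft.1 hi, by simp [nb, hx]⟩
              · exact mem_biUnion.2 ⟨Sum.inr u, mem_toRight.1 hu, by simp [nb, hxW, hux]⟩
          · simp at hx
        have := card_le_card hsub
        rw [card_disjSum, card_union_of_disjoint (hXdef ▸ disjoint_sdiff), card_empty] at this
        omega
  obtain ⟨m, hm, hmem⟩ := (Finset.all_card_le_biUnion_card_iff_exists_injective nb).1 hall
  have hsrc : ∀ i, ∃ a ∈ A, m (Sum.inl i) = Sum.inl a := by
    intro i
    have := hmem (Sum.inl i)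
    rcases h : m (Sum.inl i) with a | s
    · rw [h] at this
      exact ⟨a, by simpa [nb] using this, rfl⟩
    · rw [h] at this
      simp [nb] at this
  choose e heA he using hsrc
  have hnext : ∀ {u w}, m (Sum.inr u) = Sum.inl w → w = u ∨ (w ∈ W ∧ G.Adj u w) := by
    intro u w h
    have := hmem (Sum.inr u)
    rw [h] at this
    simpa [nb] using this
  have hlast : ∀ {u s}, m (Sum.inr u) = Sum.inr s → G.Adj u v := by
    intro u s h
    have := hmem (Sum.inr u)
    rw [h] at this
    by_contra hc
    simp [nb, hc] at this
  have hmemW : ∀ {i w}, Reached m i w → w = e i ∨ w ∈ W := by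
    intro i w h
    induction h with
    | base h => exact Or.inl (Sum.inl_injective (h.symm.trans (he i)))
    | step _ h ih =>
      rcases hnext h with rfl | h
      · exact ih
      · exact Or.inr h.1
  have hwalk : ∀ {i w}, Reached m i w →
      ∃ p : G.Walk (e i) w, ∀ x ∈ p.support, Reached m i x := by
    intro i w h
    induction h with
    | base h =>
      obtain rfl := Sum.inl_injective (h.symm.trans (he i))
      exact ⟨.nil, by simpa using .base h⟩
    | step hu h ih =>
      obtain ⟨p, hp⟩ := ih
      rcases hnext h with rfl | ⟨-, hadj⟩
      · exact ⟨p, hp⟩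
      · refine ⟨p.concat hadj, fun x hx => ?_⟩
        rw [SimpleGraph.Walk.support_concat] at hx
        rcases List.mem_append.1 (by simpa only [List.concat_eq_append] using hx) with hx | hx
        · exact hp x hx
        · obtain rfl : x = _ := by simpa using hx
          exact .step hu h
  have hfan : ∀ i, ∃ p : G.Walk (e i) v, p.IsPath ∧ ∀ x ∈ p.support, x = v ∨ Reached m i x := by
    intro i
    obtain ⟨u, s, hu, hus⟩ := Reached.exists_sink hm i (he i)
    obtain ⟨p, hp⟩ := hwalk hu
    refine ⟨(p.concat (hlast hus)).bypass, SimpleGraph.Walk.bypass_isPath _, fun x hx => ?_⟩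
    have hx := SimpleGraph.Walk.support_bypass_subset_support _ hx
    rw [SimpleGraph.Walk.support_concat] at hx
    rcases List.mem_append.1 (by simpa only [List.concat_eq_append] using hx) with hx | hx
    · exact Or.inr (hp x hx)
    · exact Or.inl (by simpa using hx)
  choose P hP hPs using hfan
  refine ⟨e, P, heA, hP, fun i j hij w hi hj => ?_, fun i w hw => ?_⟩
  · rcases hPs i w hi with h | h
    · exact h
    · rcases hPs j w hj with h' | h'
      · exact h'
      · exact absurd (h.unique hm h') hij
  · rcases hPs i w hw with h | h
    · exact Or.inr (Or.inl h)
    · exact (hmemW h).imp_right Or.inr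

/-! ### Lower bounds on cuts -/

/-- The side of the cut that contains `v`: a set `C` inside `B`, disjoint from the faulty vertices
of `B` other than `v`, and with all its neighbours in the cut `X` or among the excluded vertices. -/
theorem exists_closed_of_cut {V : Type*} [Fintype V] [DecidableEq V] (G : SimpleGraph V)
    [DecidableRel G.Adj] (T F A B : Finset V) (v : V) (hv : v ∈ B) (hAB : Disjoint A B)
    (hcov : ∀ w, w ∉ T → w ∈ A ∨ w ∈ B) (U : Finset V) (hU : ∀ u ∈ U, ¬ G.Adj u v) (X : Finset V)
    (hX : X = (A ∪ ((B \ F).erase v).filter (fun w => ∃ u ∈ U, G.Adj u w)) \ U) :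
    v ∉ X ∧ ∃ C ⊆ B, v ∈ C ∧ Disjoint C ((F ∩ B).erase v) ∧
      ∀ c ∈ C, ∀ w, G.Adj c w → w ∉ C → w ∈ X ∪ T ∪ (F ∩ B).erase v := by
  have hvA : v ∉ A := fun h => disjoint_left.1 hAB h hv
  have hvX : v ∉ X := by simp [hX, hvA]
  have hCU : ∀ c ∈ insert v (((B \ F).erase v) \ (U ∪ X)), ∀ u ∈ U, ¬ G.Adj c u := by
    intro c hc u hu hcu
    rw [mem_insert, mem_sdiff, mem_union] at hc
    rcases hc with rfl | ⟨hcW, hcn⟩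
    · exact hU u hu hcu.symm
    · push Not at hcn
      apply hcn.2
      rw [hX, mem_sdiff, mem_union, mem_filter]
      exact ⟨Or.inr ⟨hcW, u, hu, hcu.symm⟩, hcn.1⟩
  refine ⟨hvX, insert v (((B \ F).erase v) \ (U ∪ X)), ?_, mem_insert_self _ _, ?_, ?_⟩
  · intro c hc
    simp only [mem_insert, mem_sdiff, mem_erase] at hc
    rcases hc with rfl | hc
    · exact hv
    · exact hc.1.2.1
  · rw [disjoint_left]
    intro c hc hc'
    simp only [mem_insert, mem_sdiff, mem_erase, mem_inter] at hc hc'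
    tauto
  · intro c hc w hcw hwC
    by_contra hw
    have hwU : w ∉ U := fun h => hCU c hc w h hcw
    have hwA : w ∉ X → w ∉ A := fun h h' => h (by simp [hX, h', hwU])
    have := hcov w
    simp only [mem_insert, mem_sdiff, mem_erase, mem_inter, mem_union] at hw hwC
    tauto

/-- When `A` is large and few vertices of `B` are faulty, connectivity forces every cut to have
more than `f` vertices. -/
theorem cut_of_large_source {V : Type*} [Fintype V] [DecidableEq V] (G : SimpleGraph V)
    (f t : ℕ) (htf : t ≤ f) (hconn : KConnected G (3 * (f - t) / 2 + 2 * t + 1))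
    (T F A B X C : Finset V) (hT : T.card ≤ t) (hAT : Disjoint A T) (hBT : Disjoint B T)
    (hAB : Disjoint A B) (v : V) (hvC : v ∈ C) (hvX : v ∉ X) (hCB : C ⊆ B)
    (hC : ∀ c ∈ C, ∀ w, G.Adj c w → w ∉ C → w ∈ X ∪ T ∪ (F ∩ B).erase v)
    (hA : f < A.card) (hFB : (F ∩ B).card ≤ (f - T.card) / 2) : f < X.card := by
  by_contra! hXf
  set Y := X ∪ T ∪ (F ∩ B).erase v with hY
  have hYcard : Y.card < 3 * (f - t) / 2 + 2 * t + 1 := by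
    -- `f + |T| + ⌊(f - |T|) / 2⌋ = ⌊(3 * f + |T|) / 2⌋`, and `|T| ≤ t`.
    have h1 : Y.card ≤ (X ∪ T).card + ((F ∩ B).erase v).card := card_union_le _ _
    have h2 : (X ∪ T).card ≤ X.card + T.card := card_union_le _ _
    have h3 : ((F ∩ B).erase v).card ≤ (F ∩ B).card := card_erase_le
    omega
  obtain ⟨a, haA, haX⟩ := exists_mem_notMem_of_card_lt_card (hXf.trans_lt hA)
  have haY : a ∈ ((Y : Set V)ᶜ) := by
    have h1 := disjoint_left.1 hAT haA
    have h2 := disjoint_left.1 hAB haA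
    simp [hY, haX, h1, h2]
  have hvY : v ∈ ((Y : Set V)ᶜ) := by
    have h1 := disjoint_left.1 hBT (hCB hvC)
    simp [hY, hvX, h1]
  have hstay : ∀ x y : ((Y : Set V)ᶜ : Set V), (G.induce ((Y : Set V)ᶜ)).Walk x y →
      x.1 ∈ C → y.1 ∈ C := by
    intro x y p
    induction p with
    | nil => exact id
    | @cons _ z _ h _ ih =>
      intro hx
      refine ih ?_
      by_contra hc
      exact z.2 (mem_coe.2 (hC _ hx _ h hc))
  obtain ⟨p⟩ := (hconn.2 Y hYcard).preconnected ⟨v, hvY⟩ ⟨a, haY⟩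
  exact disjoint_left.1 hAB haA (hCB (hstay _ _ p hvC))

/-- When `B` is small, the neighbourhood hypotheses force every cut to have more than `f`
vertices. -/
theorem cut_of_small_target {V : Type*} [Fintype V] [DecidableEq V] (G : SimpleGraph V)
    [DecidableRel G.Adj] (f t : ℕ) (htf : t ≤ f)
    (hdeg : t = 0 → ∀ x : V, 2 * f ≤ G.degree x)
    (hnbr : 0 < t → ∀ S : Finset V, S.Nonempty → S.card ≤ t →
      2 * f + 1 ≤ (Finset.univ.filter (fun w => w ∉ S ∧ ∃ x ∈ S, G.Adj x w)).card)
    (T F B X C : Finset V) (hT : T.card ≤ t) (hF : F.card ≤ f - T.card) (v : V) (hvC : v ∈ C)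
    (hCB : C ⊆ B) (hCF : Disjoint C ((F ∩ B).erase v))
    (hC : ∀ c ∈ C, ∀ w, G.Adj c w → w ∉ C → w ∈ X ∪ T ∪ (F ∩ B).erase v)
    (hB : B.card ≤ f) : f < X.card := by
  by_contra! hXf
  set F' := (F ∩ B).erase v with hF'
  have hF'F : F'.card ≤ F.card := card_le_card ((erase_subset _ _).trans inter_subset_left)
  have hCF'B : C.card + F'.card ≤ B.card := by
    rw [← card_union_of_disjoint hCF]
    exact card_le_card (union_subset hCB ((erase_subset _ _).trans inter_subset_right))
  have hY : (X ∪ T ∪ F').card ≤ X.card + T.card + F'.card :=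
    (card_union_le _ _).trans (Nat.add_le_add_right (card_union_le _ _) _)
  have hCY : (C ∪ (X ∪ T ∪ F')).card ≤ C.card + (X ∪ T ∪ F').card := card_union_le _ _
  have hclosed : ∀ c ∈ C, ∀ w, G.Adj c w → w ∈ C ∪ (X ∪ T ∪ F') := by
    intro c hc w hcw
    rw [mem_union, or_iff_not_imp_left]
    exact hC c hc w hcw
  rcases Nat.eq_zero_or_pos t with ht | ht
  · have hsub : insert v (G.neighborFinset v) ⊆ C ∪ (X ∪ T ∪ F') := by
      intro w hw
      rw [mem_insert, SimpleGraph.mem_neighborFinset] at hw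
      rcases hw with rfl | hw
      · exact mem_union_left _ hvC
      · exact hclosed v hvC w hw
    have h1 := card_le_card hsub
    rw [card_insert_of_notMem (by simp), SimpleGraph.card_neighborFinset_eq_degree] at h1
    have h2 := hdeg ht v
    omega
  · rcases le_total C.card t with hCt | hCt
    · have h1 := hnbr ht C ⟨v, hvC⟩ hCt
      have h2 : (univ.filter (fun w => w ∉ C ∧ ∃ x ∈ C, G.Adj x w)).card ≤ (X ∪ T ∪ F').card := by
        apply card_le_card
        intro w hw
        obtain ⟨-, hwC, c, hc, hcw⟩ := mem_filter.1 hw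
        exact hC c hc w hcw hwC
      omega
    -- `S` and its at least `2 * f + 1` neighbours all lie in `C ∪ X ∪ T ∪ F'`, which has at most
    -- `2 * f + t` elements.
    · obtain ⟨S, hSC, hS⟩ := exists_subset_card_eq hCt
      have h1 := hnbr ht S (card_pos.1 (by omega)) hS.le
      have h2 : (S ∪ univ.filter (fun w => w ∉ S ∧ ∃ x ∈ S, G.Adj x w)).card ≤
          (C ∪ (X ∪ T ∪ F')).card := by
        apply card_le_card
        intro w hw
        rcases mem_union.1 hw with hw | hw
        · exact mem_union_left _ (hSC hw)
        · obtain ⟨-, -, c, hc, hcw⟩ := mem_filter.1 hw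
          exact hclosed c (hSC hc) w hcw
      rw [card_union_of_disjoint (by
        rw [disjoint_left]
        intro w hw hw'
        exact (mem_filter.1 hw').2.1 hw)] at h2
      omega

/-! ### The fan from `A` to `v` -/

theorem hybrid_disjoint_paths_to_B_node {V : Type*} [Fintype V] [DecidableEq V]
    (G : SimpleGraph V) [DecidableRel G.Adj] (f t : ℕ) (htf : t ≤ f)
    (hconn : KConnected G (3 * (f - t) / 2 + 2 * t + 1))
    (hdeg : t = 0 → ∀ x : V, 2 * f ≤ G.degree x)
    (hnbr : 0 < t → ∀ S : Finset V, S.Nonempty → S.card ≤ t →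
      2 * f + 1 ≤ (Finset.univ.filter (fun w => w ∉ S ∧ ∃ x ∈ S, G.Adj x w)).card)
    (T : Finset V) (hT : T.card ≤ t)
    (F : Finset V) (hFT : F ⊆ Tᶜ) (hF : F.card ≤ f - T.card)
    (Z N A B : Finset V) (hZ : Z ⊆ Tᶜ) (hN : N = Tᶜ \ Z)
    (h1 : (Z ∩ F).card ≤ (f - T.card) / 2 → f < N.card → A = N ∧ B = Z)
    (h2 : (Z ∩ F).card ≤ (f - T.card) / 2 → N.card ≤ f → A = Z ∧ B = N)
    (h3 : (f - T.card) / 2 < (Z ∩ F).card → f < Z.card → A = Z ∧ B = N)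
    (h4 : (f - T.card) / 2 < (Z ∩ F).card → Z.card ≤ f → A = N ∧ B = Z)
    (v : V) (hvT : v ∉ T) (hv : v ∈ B) :
    ∃ (e : Fin (f + 1) → V) (P : ∀ i, G.Walk (e i) v),
      (∀ i, e i ∈ A) ∧
      (∀ i, (P i).IsPath) ∧
      (∀ i j, i ≠ j → ∀ w, w ∈ (P i).support → w ∈ (P j).support → w = v) ∧
      (∀ i, ∀ w ∈ (P i).support, w ∈ F ∪ T → w = e i ∨ w = v) := by
  have hZN : Z ∪ N = Tᶜ := by rw [hN, union_sdiff_of_subset hZ]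
  have hdis : Disjoint Z N := hN ▸ disjoint_sdiff
  have hsplit : (Z ∩ F).card + (N ∩ F).card ≤ F.card := by
    rw [← card_union_of_disjoint
      (hdis.mono inter_subset_left inter_subset_left)]
    exact card_le_card (union_subset inter_subset_right inter_subset_right)
  have hcases : ((A = N ∧ B = Z) ∨ (A = Z ∧ B = N)) ∧
      ((f < A.card ∧ (F ∩ B).card ≤ (f - T.card) / 2) ∨ B.card ≤ f) := by
    rw [inter_comm F B]
    rcases le_or_gt (Z ∩ F).card ((f - T.card) / 2) with hz | hz
    · rcases lt_or_ge f N.card with hn | hn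
      · obtain ⟨rfl, rfl⟩ := h1 hz hn
        exact ⟨Or.inl ⟨rfl, rfl⟩, Or.inl ⟨hn, hz⟩⟩
      · obtain ⟨rfl, rfl⟩ := h2 hz hn
        exact ⟨Or.inr ⟨rfl, rfl⟩, Or.inr hn⟩
    · rcases lt_or_ge f Z.card with hn | hn
      · obtain ⟨rfl, rfl⟩ := h3 hz hn
        exact ⟨Or.inr ⟨rfl, rfl⟩, Or.inl ⟨hn, by omega⟩⟩
      · obtain ⟨rfl, rfl⟩ := h4 hz hn
        exact ⟨Or.inl ⟨rfl, rfl⟩, Or.inr hn⟩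
  obtain ⟨hor, hsize⟩ := hcases
  have hAB : Disjoint A B := by
    rcases hor with ⟨rfl, rfl⟩ | ⟨rfl, rfl⟩
    · exact hdis.symm
    · exact hdis
  have hunion : A ∪ B = Tᶜ := by
    rcases hor with ⟨rfl, rfl⟩ | ⟨rfl, rfl⟩
    · rw [union_comm, hZN]
    · exact hZN
  have hcov : ∀ w, w ∉ T → w ∈ A ∨ w ∈ B := fun w hw => by
    rw [← mem_union, hunion, mem_compl]
    exact hw
  have hAT : Disjoint A T := by
    rw [← subset_compl_iff_disjoint_right, ← hunion]
    exact subset_union_left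
  have hBT : Disjoint B T := by
    rw [← subset_compl_iff_disjoint_right, ← hunion]
    exact subset_union_right
  obtain ⟨e, P, heA, hP, hPd, hPs⟩ := exists_fan G (f + 1) A ((B \ F).erase v) v
    (by
      intro U hU
      obtain ⟨hvX, C, hCB, hvC, hCF, hC⟩ :=
        exists_closed_of_cut G T F A B v hv hAB hcov U hU _ rfl
      rcases hsize with ⟨hA, hFB⟩ | hB
      · exact cut_of_large_source G f t htf hconn T F A B _ C hT hAT hBT hAB v hvC hvX hCB hC
          hA hFB
      · exact cut_of_small_target G f t htf hdeg hnbr T F B _ C hT hF v hvC hCB hCF hC hB)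
  refine ⟨e, P, heA, hP, hPd, fun i w hw hwFT => ?_⟩
  rcases hPs i w hw with h | h | h
  · exact Or.inl h
  · exact Or.inr h
  · have hwB := mem_sdiff.1 (mem_of_mem_erase h)
    rcases mem_union.1 hwFT with h' | h'
    · exact absurd h' hwB.2
    · exact absurd h' (disjoint_left.1 hBT hwB.1)
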